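/- arXiv:1903.11968 — 2 statements merged into one kernel-verified Lean document; each statement's English description precedes it below -/
import Mathlib

section
/- Let N = 2^v r, where v > 0 and r is an odd prime such that 2 is a primitive root modulo r. Let S be an N-periodic binary sequence with L(S) = N > L_{N,1}(S) ≥ N - min(2^v, r - 2), and set Z = 2^{⌈log_2(N - L_{N,1}(S))⌉}. Then there exists exactly one position j with 0 ≤ j < Z such that L(S + E_1(j)) = L_{N,1}(S), and L_{N,1}(S) = L_{N,1;Z}(S). -/
/-- Generating polynomial `S^N(x) = s_0 + s_1 x + ... + s_{N-1} x^{N-1}` of one period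
of an `N`-periodic binary sequence. -/
noncomputable def genPoly {N : ℕ} (S : Fin N → ZMod 2) : Polynomial (ZMod 2) :=
  ∑ i : Fin N, Polynomial.C (S i) * Polynomial.X ^ (i : ℕ)

/-- Linear complexity `L(S) = N - deg (gcd (1 - x^N, S^N(x)))`. -/
noncomputable def linComp {N : ℕ} (S : Fin N → ZMod 2) : ℕ :=
  N - (EuclideanDomain.gcd (1 - Polynomial.X ^ N) (genPoly S)).natDegree

/-- Hamming weight of one period of an `N`-periodic binary sequence. -/
def wt {N : ℕ} (T : Fin N → ZMod 2) : ℕ :=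
  (Finset.univ.filter (fun i => T i ≠ 0)).card

/-- `k`-error linear complexity `L_{N,k}(S)`. -/
noncomputable def errLC {N : ℕ} (S : Fin N → ZMod 2) (k : ℕ) : ℕ :=
  sInf {c | ∃ T : Fin N → ZMod 2, wt T ≤ k ∧ linComp (S + T) = c}

/-- `k`-error linear complexity with a zone of length `Z`: `L_{N,k;Z}(S)`. -/
noncomputable def errLCZone {N : ℕ} (S : Fin N → ZMod 2) (k Z : ℕ) : ℕ :=
  sInf {c | ∃ T : Fin N → ZMod 2, wt T ≤ k ∧ (∀ i : Fin N, Z ≤ (i : ℕ) → T i = 0) ∧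
    linComp (S + T) = c}

/-- `E_1(j)`: the sequence whose only nonzero term in one period is a `1` at position `j`. -/
def E1 {N : ℕ} (j : Fin N) : Fin N → ZMod 2 :=
  fun i => if i = j then 1 else 0

open Polynomial in
theorem aux_pow (a q : ℕ) :
    (X ^ (2 ^ a * q) - 1 : (ZMod 2)[X]) = (X ^ q - 1) ^ (2 ^ a) := by
  have : Fact (Nat.Prime 2) := ⟨Nat.prime_two⟩
  rw [sub_pow_char_pow, one_pow, ← pow_mul, mul_comm]

open Polynomial in
theorem aux_natDegree_pow (m : ℕ) : ((X - 1 : (ZMod 2)[X]) ^ m).natDegree = m := by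
  have : (X - 1 : (ZMod 2)[X]) = X - C 1 := by simp
  rw [this, natDegree_pow, natDegree_X_sub_C, mul_one]

open Polynomial in
theorem aux_prime : Prime (X - 1 : (ZMod 2)[X]) := by
  have : (X - 1 : (ZMod 2)[X]) = X - C 1 := by simp
  rw [this]; exact prime_X_sub_C 1

open Polynomial in
theorem aux_ord {m d : ℕ} (hd : d ≠ 0) (h : (X - 1 : (ZMod 2)[X]) ^ m ∣ X ^ d - 1) :
    2 ^ (Nat.clog 2 m) ∣ d := by
  obtain ⟨a, q, hq, rfl⟩ := Nat.exists_eq_two_pow_mul_odd hd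
  rw [aux_pow, ← geom_sum_mul, mul_pow] at h
  have hnd : ¬ (X - 1 : (ZMod 2)[X]) ∣ ∑ i ∈ Finset.range q, X ^ i := by
    have h1 : (X - 1 : (ZMod 2)[X]) = X - C 1 := by simp
    rw [h1, dvd_iff_isRoot, IsRoot.def, eval_geom_sum]
    simp only [one_pow, Finset.sum_const, Finset.card_range, nsmul_eq_mul, mul_one]
    rw [ZMod.natCast_eq_zero_iff_even]
    exact Nat.not_even_iff_odd.2 hq
  have hc : IsCoprime ((X - 1 : (ZMod 2)[X]) ^ m) ((∑ i ∈ Finset.range q, X ^ i) ^ 2 ^ a) :=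
    ((aux_prime.irreducible.coprime_iff_not_dvd).2 hnd).pow
  have h2 := hc.dvd_of_dvd_mul_left h
  have h3 := natDegree_le_of_dvd h2 (pow_ne_zero _ aux_prime.ne_zero)
  rw [aux_natDegree_pow, aux_natDegree_pow] at h3
  exact Dvd.dvd.mul_right (pow_dvd_pow 2 (Nat.clog_le_of_le_pow h3)) q

open Polynomial in
theorem aux_irr (r : ℕ) (hr : r.Prime) (hodd : Odd r)
    (hprim : orderOf (2 : ZMod r) = r - 1) : Irreducible (cyclotomic r (ZMod 2)) := by
  have : Fact (Nat.Prime 2) := ⟨Nat.prime_two⟩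
  have h2 : ¬ 2 ∣ r := fun h => (Nat.not_even_iff_odd.2 hodd) (even_iff_two_dvd.2 h)
  refine ZMod.irreducible_of_dvd_cyclotomic_of_natDegree h2 dvd_rfl ?_
  rw [natDegree_cyclotomic, Nat.totient_prime hr, ← orderOf_units, ZMod.coe_unitOfCoprime]
  exact hprim.symm

open Polynomial in
/-- A divisor of `1 - X^N` of small degree is a power of `X - 1`. -/
theorem aux_small (v r : ℕ) (hr : r.Prime) (hodd : Odd r)
    (hprim : orderOf (2 : ZMod r) = r - 1) (g : (ZMod 2)[X])
    (hg : g ∣ 1 - X ^ (2 ^ v * r)) (hdeg : g.natDegree < r - 1) :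
    (X - 1) ^ g.natDegree ∣ g ∧ g.natDegree ≤ 2 ^ v := by
  have := Fact.mk hr
  have hg' : g ∣ X ^ (2 ^ v * r) - 1 := by rwa [← dvd_neg, neg_sub]
  rw [aux_pow, ← cyclotomic_prime_mul_X_sub_one, mul_pow] at hg'
  have hirr := aux_irr r hr hodd hprim
  have hg0 : g ≠ 0 := by
    rintro rfl
    rw [zero_dvd_iff] at hg'
    exact mul_ne_zero (pow_ne_zero _ (cyclotomic_ne_zero _ _))
      (pow_ne_zero _ aux_prime.ne_zero) hg'
  have hnd : ¬ cyclotomic r (ZMod 2) ∣ g := by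
    intro h
    have := natDegree_le_of_dvd h hg0
    rw [natDegree_cyclotomic, Nat.totient_prime hr] at this
    omega
  have hc : IsCoprime g (cyclotomic r (ZMod 2) ^ 2 ^ v) :=
    (((hirr.coprime_iff_not_dvd).2 hnd).pow_left).symm
  have h2 := hc.dvd_of_dvd_mul_left hg'
  obtain ⟨i, hi, has⟩ := (dvd_prime_pow aux_prime _).1 h2
  have hd : g.natDegree = i := by
    rw [natDegree_eq_of_degree_eq (degree_eq_degree_of_associated has), aux_natDegree_pow]
  rw [hd]
  exact ⟨has.symm.dvd, hi⟩

open Polynomial in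
theorem aux_gen {N : ℕ} (S : Fin N → ZMod 2) (j : Fin N) :
    genPoly (S + E1 j) = genPoly S + X ^ (j : ℕ) := by
  simp [genPoly, E1, add_mul, Finset.sum_add_distrib]

theorem aux_wt {N : ℕ} (T : Fin N → ZMod 2) (h : wt T ≤ 1) : T = 0 ∨ ∃ j, T = E1 j := by
  have h01 : ∀ a : ZMod 2, a ≠ 0 → a = 1 := by decide
  unfold wt at h
  by_cases h0 : T = 0
  · exact Or.inl h0
  · right
    obtain ⟨j, hj⟩ := Function.ne_iff.1 h0
    refine ⟨j, funext fun i => ?_⟩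
    unfold E1
    split_ifs with hij
    · subst hij; exact h01 _ hj
    · by_contra hi
      exact hij (Finset.card_le_one.1 h i (by simpa using hi) j (by simpa using hj))

theorem aux_wtE {N : ℕ} (j : Fin N) : wt (E1 j) ≤ 1 := by
  unfold wt E1
  refine Finset.card_le_one.2 fun a ha b hb => ?_
  simp at ha hb
  rw [ha, hb]

open Polynomial in
theorem aux_ne {N : ℕ} (hN : N ≠ 0) : (1 - X ^ N : (ZMod 2)[X]) ≠ 0 := by
  rw [← neg_sub, neg_ne_zero]
  simpa using X_pow_sub_C_ne_zero (Nat.pos_of_ne_zero hN) (1 : ZMod 2)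

open Polynomial in
theorem aux_degN {N : ℕ} (hN : N ≠ 0) (S : Fin N → ZMod 2) :
    (EuclideanDomain.gcd (1 - X ^ N) (genPoly S)).natDegree ≤ N := by
  refine (natDegree_le_of_dvd (EuclideanDomain.gcd_dvd_left _ _) (aux_ne hN)).trans ?_
  compute_degree

/-- For `N = 2^v r` with `2` primitive mod the odd prime `r`, `L(S) = N` and
`N > L_{N,1}(S) ≥ N - min(2^v, r-2)`: there is exactly one `j < Z` with
`L(S + E_1(j)) = L_{N,1}(S)`, and `L_{N,1}(S) = L_{N,1;Z}(S)`. -/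
theorem stmt16 (v r : ℕ) (hv : 0 < v) (hr : r.Prime) (hodd : Odd r)
    (hprim : orderOf (2 : ZMod r) = r - 1)
    (S : Fin (2^v * r) → ZMod 2)
    (hLS : linComp S = 2^v * r)
    (hgt : errLC S 1 < 2^v * r)
    (hge : 2^v * r - min (2^v) (r - 2) ≤ errLC S 1) :
    (∃! j : Fin (2^v * r), (j : ℕ) < 2^(Nat.clog 2 (2^v * r - errLC S 1)) ∧
      linComp (S + E1 j) = errLC S 1) ∧
    errLC S 1 = errLCZone S 1 (2^(Nat.clog 2 (2^v * r - errLC S 1))) := by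
  have hN : 2 ^ v * r ≠ 0 := mul_ne_zero (by positivity) hr.ne_zero
  have hmin : ∀ T : Fin (2 ^ v * r) → ZMod 2, wt T ≤ 1 → errLC S 1 ≤ linComp (S + T) :=
    fun T hT => Nat.sInf_le ⟨T, hT, rfl⟩
  obtain ⟨T, hT, hTc⟩ : errLC S 1 ∈
      {c | ∃ T : Fin (2 ^ v * r) → ZMod 2, wt T ≤ 1 ∧ linComp (S + T) = c} :=
    Nat.sInf_mem ⟨linComp (S + 0), 0, by simp [wt], rfl⟩
  obtain ⟨m, hm⟩ : ∃ m, m = 2 ^ v * r - errLC S 1 := ⟨_, rfl⟩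
  have hr2 := hr.two_le
  have hm1 : m ≤ 2 ^ v := by
    have := min_le_left (2 ^ v) (r - 2)
    omega
  have hm2 : m < r - 1 := by
    have := min_le_right (2 ^ v) (r - 2)
    omega
  rw [← hm]
  have hZ : 2 ^ Nat.clog 2 m ∣ 2 ^ v := pow_dvd_pow 2 (Nat.clog_le_of_le_pow hm1)
  have hmZ : m ≤ 2 ^ Nat.clog 2 m := Nat.le_pow_clog (by norm_num) m
  have hZpos : 0 < 2 ^ Nat.clog 2 m := by positivity
  -- divisibility consequence of attaining the minimum
  have hdvd : ∀ j : Fin (2 ^ v * r), linComp (S + E1 j) = errLC S 1 →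
      (Polynomial.X - 1) ^ m ∣ genPoly S + Polynomial.X ^ (j : ℕ) := by
    intro j hj
    have hd := aux_degN hN (S + E1 j)
    have hgm : (EuclideanDomain.gcd (1 - Polynomial.X ^ (2 ^ v * r))
        (genPoly (S + E1 j))).natDegree = m := by
      unfold linComp at hj
      omega
    have := (aux_small v r hr hodd hprim _ (EuclideanDomain.gcd_dvd_left _ _)
      (by rw [hgm]; exact hm2)).1
    rw [hgm] at this
    rw [← aux_gen]
    exact this.trans (EuclideanDomain.gcd_dvd_right _ _)
  have hconv : ∀ j : Fin (2 ^ v * r),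
      (Polynomial.X - 1) ^ m ∣ genPoly S + Polynomial.X ^ (j : ℕ) →
      linComp (S + E1 j) = errLC S 1 := by
    intro j hj
    refine le_antisymm ?_ (hmin _ (aux_wtE j))
    have h1 : (Polynomial.X - 1 : Polynomial (ZMod 2)) ^ m ∣ 1 - Polynomial.X ^ (2 ^ v * r) := by
      rw [← dvd_neg, neg_sub, aux_pow]
      exact (pow_dvd_pow _ hm1).trans (pow_dvd_pow_of_dvd (by
        simpa using sub_dvd_pow_sub_pow (Polynomial.X : Polynomial (ZMod 2)) 1 r) _)
    rw [← aux_gen] at hj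
    have h2 := EuclideanDomain.dvd_gcd h1 hj
    have h3 := Polynomial.natDegree_le_of_dvd h2
      (fun h => aux_ne hN (EuclideanDomain.gcd_eq_zero_iff.1 h).1)
    rw [aux_natDegree_pow] at h3
    unfold linComp
    omega
  obtain ⟨j0, rfl⟩ : ∃ j, T = E1 j := by
    rcases aux_wt T hT with rfl | h
    · rw [add_zero] at hTc
      omega
    · exact h
  have hj0 := hdvd j0 hTc
  -- the reduced position
  have hlt : (j0 : ℕ) % 2 ^ Nat.clog 2 m < 2 ^ v * r :=
    lt_of_le_of_lt (Nat.mod_le _ _) j0.2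
  have hdiff : ∀ a b : ℕ, a ≤ b → (Polynomial.X ^ b - Polynomial.X ^ a : Polynomial (ZMod 2)) =
      Polynomial.X ^ a * (Polynomial.X ^ (b - a) - 1) := by
    intro a b hab
    rw [mul_sub, ← pow_add, mul_one, Nat.add_sub_cancel' hab]
  obtain ⟨j, hjv⟩ : ∃ j : Fin (2 ^ v * r), (j : ℕ) = (j0 : ℕ) % 2 ^ Nat.clog 2 m :=
    ⟨⟨_, hlt⟩, rfl⟩
  have hjZ : (j : ℕ) < 2 ^ Nat.clog 2 m := by rw [hjv]; exact Nat.mod_lt _ hZpos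
  have hjc : linComp (S + E1 j) = errLC S 1 := by
    apply hconv
    have hle : (j : ℕ) ≤ j0 := by rw [hjv]; exact Nat.mod_le _ _
    have h1 : (Polynomial.X - 1 : Polynomial (ZMod 2)) ^ m ∣
        Polynomial.X ^ (j0 : ℕ) - Polynomial.X ^ (j : ℕ) := by
      rw [hdiff _ _ hle]
      apply Dvd.dvd.mul_left
      obtain ⟨k, hk⟩ : 2 ^ Nat.clog 2 m ∣ (j0 : ℕ) - j := by
        rw [hjv]; exact Nat.dvd_sub_mod _
      rw [hk, aux_pow]
      exact (pow_dvd_pow _ hmZ).trans (pow_dvd_pow_of_dvd (by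
        simpa using sub_dvd_pow_sub_pow (Polynomial.X : Polynomial (ZMod 2)) 1 k) _)
    have := dvd_sub hj0 h1
    convert this using 1
    ring
  have huniq : ∀ a b : Fin (2 ^ v * r), (a : ℕ) < b → (b : ℕ) < 2 ^ Nat.clog 2 m →
      linComp (S + E1 a) = errLC S 1 → linComp (S + E1 b) = errLC S 1 → False := by
    intro a b hab hb ha' hb'
    have h1 := dvd_sub (hdvd b hb') (hdvd a ha')
    rw [add_sub_add_left_eq_sub, hdiff _ _ hab.le] at h1
    have hc : IsCoprime ((Polynomial.X - 1 : Polynomial (ZMod 2)) ^ m)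
        (Polynomial.X ^ (a : ℕ)) := by
      apply IsCoprime.pow
      exact ⟨-1, 1, by ring⟩
    have h2 := aux_ord (by omega) (hc.dvd_of_dvd_mul_left h1)
    have := Nat.le_of_dvd (by omega) h2
    omega
  refine ⟨⟨j, ⟨hjZ, hjc⟩, ?_⟩, ?_⟩
  · rintro k ⟨hk, hkc⟩
    rcases lt_trichotomy (k : ℕ) (j : ℕ) with h | h | h
    · exact (huniq k j h hjZ hkc hjc).elim
    · exact Fin.ext h
    · exact (huniq j k h hk hjc hkc).elim
  · have hmem : errLC S 1 ∈ {c | ∃ T : Fin (2 ^ v * r) → ZMod 2, wt T ≤ 1 ∧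
        (∀ i : Fin (2 ^ v * r), 2 ^ Nat.clog 2 m ≤ (i : ℕ) → T i = 0) ∧
        linComp (S + T) = c} := by
      refine ⟨E1 j, aux_wtE j, fun i hi => ?_, hjc⟩
      unfold E1
      rw [if_neg]
      rintro rfl
      omega
    apply le_antisymm
    · obtain ⟨T', hT', -, hc⟩ := Nat.sInf_mem ⟨_, hmem⟩
      unfold errLCZone
      rw [← hc]
      exact hmin T' hT'
    · exact Nat.sInf_le hmem
end

section
/- Let N = 2^v p_1^{s_1} p_2^{s_2} ⋯ p_n^{s_n}, where v > 0, the p_i are distinct odd primes, the s_i are positive integers, and 2 is a primitive root both modulo p_i and modulo p_i^2 for every 1 ≤ i ≤ n. Let 1 ≤ k ≤ N and let S be an N-periodic binary sequence such that L(S) > L_{N,k}(S) ≥ N - min(2^v, p_1 - 2, ..., p_n - 2). Then, with Z = 2^{⌈log_2(N - L_{N,k}(S))⌉}, one has L_{N,k}(S) = L_{N,k;Z}(S). -/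
open Polynomial in
/-- A small irreducible factor of `X^N - 1` is associated to `X - 1`. -/
lemma aux_irred (v n : ℕ) (p s : Fin n → ℕ)
    (hp : ∀ i, (p i).Prime)
    (hprim1 : ∀ i, orderOf (2 : ZMod (p i)) = Nat.totient (p i))
    (q : (ZMod 2)[X]) (hq : Irreducible q)
    (hdvd : q ∣ 1 - X ^ (2^v * ∏ i, p i ^ s i))
    (hdeg : ∀ j, q.natDegree < p j - 1) : Associated q (X - C 1) := by
  have : Fact (Nat.Prime 2) := ⟨Nat.prime_two⟩
  have : Fact (Irreducible q) := ⟨hq⟩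
  have hdpos : 0 < q.natDegree := hq.natDegree_pos
  let pb := AdjoinRoot.powerBasis hq.ne_zero
  have : Module.Finite (ZMod 2) (AdjoinRoot q) := pb.finite
  have : Finite (AdjoinRoot q) := Module.finite_of_finite (ZMod 2)
  have : Fintype (AdjoinRoot q) := Fintype.ofFinite _
  have hcard : Fintype.card (AdjoinRoot q) = 2 ^ q.natDegree := by
    rw [Module.card_eq_pow_finrank (K := ZMod 2), pb.finrank, ZMod.card]
    rfl
  have hN : (AdjoinRoot.root q) ^ (2^v * ∏ i, p i ^ s i) = 1 := by
    have h := AdjoinRoot.mk_eq_zero.2 hdvd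
    rw [map_sub, map_one, map_pow, AdjoinRoot.mk_X, sub_eq_zero] at h
    exact h.symm
  have hNpos : 2^v * ∏ i, p i ^ s i ≠ 0 :=
    mul_ne_zero (by positivity)
      (Finset.prod_ne_zero_iff.2 fun i _ => pow_ne_zero _ (hp i).ne_zero)
  have hr0 : AdjoinRoot.root q ≠ 0 := by
    intro h
    rw [h, zero_pow hNpos] at hN
    exact zero_ne_one hN
  have hM : (AdjoinRoot.root q) ^ (2 ^ q.natDegree - 1) = 1 := by
    rw [← hcard]
    exact FiniteField.pow_card_sub_one_eq_one _ hr0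
  have hle : 1 ≤ 2 ^ q.natDegree := Nat.one_le_two_pow
  have hcop : Nat.Coprime (2 ^ q.natDegree - 1) (2^v * ∏ i, p i ^ s i) := by
    apply Nat.Coprime.mul_right
    · apply Nat.Coprime.pow_right
      rw [Nat.coprime_two_right]
      exact Nat.Even.sub_odd hle ((Nat.even_pow' hdpos.ne').2 even_two) odd_one
    · apply Nat.Coprime.prod_right
      intro i _
      apply Nat.Coprime.pow_right
      rw [Nat.coprime_comm, (hp i).coprime_iff_not_dvd]
      intro hd
      have h2 : (2 : ZMod (p i)) ^ q.natDegree = 1 := by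
        have h3 := (ZMod.natCast_eq_zero_iff _ _).2 hd
        rw [Nat.cast_sub hle, sub_eq_zero] at h3
        simpa using h3
      have h4 := orderOf_dvd_of_pow_eq_one h2
      rw [hprim1, Nat.totient_prime (hp i)] at h4
      have := Nat.le_of_dvd hdpos h4
      have := hdeg i
      omega
  have h1 : AdjoinRoot.root q = 1 := by
    have := Nat.dvd_gcd (orderOf_dvd_of_pow_eq_one hM) (orderOf_dvd_of_pow_eq_one hN)
    rw [hcop.gcd_eq_one, Nat.dvd_one] at this
    exact orderOf_eq_one_iff.1 this
  have hd : q ∣ X - C 1 := by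
    rw [← AdjoinRoot.mk_eq_zero, map_sub, AdjoinRoot.mk_X, h1]
    simp
  exact hq.associated_of_dvd (irreducible_X_sub_C 1) hd

open Polynomial in
lemma aux_pow_s18 (v n : ℕ) (p s : Fin n → ℕ)
    (hp : ∀ i, (p i).Prime)
    (hprim1 : ∀ i, orderOf (2 : ZMod (p i)) = Nat.totient (p i))
    (g : (ZMod 2)[X]) (hg : g ≠ 0)
    (hdvd : g ∣ 1 - X ^ (2^v * ∏ i, p i ^ s i))
    (hdeg : ∀ j, g.natDegree < p j - 1) : Associated g ((X - C 1) ^ g.natDegree) := by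
  obtain ⟨h, hgh, hnd⟩ := exists_eq_pow_rootMultiplicity_mul_and_not_dvd g hg 1
  have hu : IsUnit h := by
    by_contra hu
    have hh0 : h ≠ 0 := by rintro rfl; simp at hnd
    obtain ⟨q, hq, hqh⟩ := WfDvdMonoid.exists_irreducible_factor hu hh0
    have hqg : q ∣ g := hqh.trans ⟨_, hgh.trans (mul_comm _ _)⟩
    have := aux_irred v n p s hp hprim1 q hq (hqg.trans hdvd)
      fun j => (natDegree_le_of_dvd hqg hg).trans_lt (hdeg j)
    exact hnd (this.symm.dvd.trans hqh)
  set a := rootMultiplicity 1 g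
  have hA : Associated ((X - C 1) ^ a) g := ⟨hu.unit, hgh.symm⟩
  have hd : g.natDegree = a := by
    rw [← natDegree_eq_of_degree_eq (degree_eq_degree_of_associated hA), natDegree_pow,
      natDegree_X_sub_C, mul_one]
  rw [hd]
  exact hA.symm

/-- Folding of a sequence modulo `Z`. -/
def foldSeq {N : ℕ} (Z : ℕ) (T : Fin N → ZMod 2) : Fin N → ZMod 2 :=
  fun i => ∑ j ∈ Finset.univ.filter
    (fun j : Fin N => (⟨(j : ℕ) % Z, (Nat.mod_le _ _).trans_lt j.2⟩ : Fin N) = i), T j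

lemma foldSeq_zone {N Z : ℕ} (hZ : 0 < Z) (T : Fin N → ZMod 2) (i : Fin N) (hi : Z ≤ (i : ℕ)) :
    foldSeq Z T i = 0 := by
  unfold foldSeq
  apply Finset.sum_eq_zero
  intro j hj
  have h := congrArg Fin.val (Finset.mem_filter.1 hj).2
  have := Nat.mod_lt (j : ℕ) hZ
  simp only at h
  omega

lemma foldSeq_wt {N : ℕ} (Z : ℕ) (T : Fin N → ZMod 2) : wt (foldSeq Z T) ≤ wt T := by
  unfold wt
  refine le_trans (Finset.card_le_card ?_) (Finset.card_image_le
    (f := fun j : Fin N => (⟨(j : ℕ) % Z, (Nat.mod_le _ _).trans_lt j.2⟩ : Fin N)))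
  intro i hi
  have hi := (Finset.mem_filter.1 hi).2
  obtain ⟨j, hj, hj0⟩ := Finset.exists_ne_zero_of_sum_ne_zero hi
  exact Finset.mem_image.2 ⟨j, Finset.mem_filter.2 ⟨Finset.mem_univ _, hj0⟩,
    (Finset.mem_filter.1 hj).2⟩

open Polynomial in
lemma foldSeq_dvd {N : ℕ} (Z : ℕ) (T : Fin N → ZMod 2) :
    (X ^ Z - 1 : (ZMod 2)[X]) ∣ genPoly T - genPoly (foldSeq Z T) := by
  have h : genPoly (foldSeq Z T) = ∑ j : Fin N, C (T j) * X ^ ((j : ℕ) % Z) := by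
    unfold genPoly foldSeq
    rw [← Finset.sum_fiberwise Finset.univ
      (fun j : Fin N => (⟨(j : ℕ) % Z, (Nat.mod_le _ _).trans_lt j.2⟩ : Fin N))
      (fun j : Fin N => C (T j) * X ^ ((j : ℕ) % Z))]
    refine Finset.sum_congr rfl fun i _ => ?_
    rw [map_sum, Finset.sum_mul]
    refine Finset.sum_congr rfl fun j hj => ?_
    rw [← (Finset.mem_filter.1 hj).2]
  rw [h, genPoly, ← Finset.sum_sub_distrib]
  refine Finset.dvd_sum fun j _ => ?_
  rw [← mul_sub]
  apply Dvd.dvd.mul_left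
  have : (X ^ (j : ℕ) - X ^ ((j : ℕ) % Z) : (ZMod 2)[X])
      = X ^ ((j : ℕ) % Z) * ((X ^ Z) ^ ((j : ℕ) / Z) - 1 ^ ((j : ℕ) / Z)) := by
    rw [one_pow, mul_sub, ← pow_mul, ← pow_add, Nat.mod_add_div, mul_one]
  rw [this]
  exact (sub_dvd_pow_sub_pow _ _ _).mul_left _

lemma genPoly_add {N : ℕ} (S T : Fin N → ZMod 2) : genPoly (S + T) = genPoly S + genPoly T := by
  simp [genPoly, add_mul, Finset.sum_add_distrib]

lemma stmt18_core (v n k N : ℕ) (p s : Fin n → ℕ)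
    (hNdef : N = 2^v * ∏ i, p i ^ s i)
    (hp : ∀ i, (p i).Prime) (hs : ∀ i, 0 < s i)
    (hprim1 : ∀ i, orderOf (2 : ZMod (p i)) = Nat.totient (p i))
    (S : Fin N → ZMod 2)
    (hge2 : ∀ j, N - (p j - 2) ≤ errLC S k) :
    errLC S k = errLCZone S k (2^(Nat.clog 2 (N - errLC S k))) := by
  classical
  have hN0 : N ≠ 0 := by
    rw [hNdef]
    exact mul_ne_zero (by positivity)
      (Finset.prod_ne_zero_iff.2 fun i _ => pow_ne_zero _ (hp i).ne_zero)
  have hone : (1 - Polynomial.X ^ N : Polynomial (ZMod 2)) ≠ 0 := by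
    rw [← neg_ne_zero, neg_sub]
    exact Polynomial.X_pow_sub_C_ne_zero (Nat.pos_of_ne_zero hN0) 1
  have hdegone : (1 - Polynomial.X ^ N : Polynomial (ZMod 2)).natDegree = N := by
    rw [← Polynomial.natDegree_neg, neg_sub]
    exact Polynomial.natDegree_X_pow_sub_C (r := (1 : ZMod 2))
  obtain ⟨T, hT, hTe⟩ := Nat.sInf_mem
    (s := {c | ∃ T : Fin N → ZMod 2, wt T ≤ k ∧ linComp (S + T) = c})
    ⟨_, 0, by simp [wt], rfl⟩
  change linComp (S + T) = errLC S k at hTe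
  have hsub : ∀ (Z : ℕ), ∀ T' : Fin N → ZMod 2, wt T' ≤ k → errLC S k ≤ linComp (S + T') :=
    fun Z T' h => Nat.sInf_le ⟨T', h, rfl⟩
  set g := EuclideanDomain.gcd (1 - Polynomial.X ^ N) (genPoly (S + T)) with hg
  have hgd : g ∣ 1 - Polynomial.X ^ N := EuclideanDomain.gcd_dvd_left _ _
  have hgS : g ∣ genPoly (S + T) := EuclideanDomain.gcd_dvd_right _ _
  have hg0 : g ≠ 0 := ne_zero_of_dvd_ne_zero hone hgd
  have hgN : g.natDegree ≤ N := hdegone ▸ Polynomial.natDegree_le_of_dvd hgd hone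
  have hL : errLC S k = N - g.natDegree := hTe.symm
  have hdeg : ∀ j, g.natDegree < p j - 1 := by
    intro j
    have hpN : p j ≤ N := Nat.le_of_dvd (Nat.pos_of_ne_zero hN0) (by
      rw [hNdef]
      exact ((dvd_pow_self (p j) (hs j).ne').trans
        (Finset.dvd_prod_of_mem (fun i => p i ^ s i) (Finset.mem_univ j))).mul_left _)
    have := hge2 j
    have := (hp j).two_le
    omega
  have hA := aux_pow_s18 v n p s hp hprim1 g hg0 (hNdef ▸ hgd) hdeg
  have hc : N - errLC S k = g.natDegree := by omega
  rw [hc]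
  set e := Nat.clog 2 g.natDegree
  have hZle : g.natDegree ≤ 2 ^ e := Nat.le_pow_clog (by norm_num) _
  have hgZ : g ∣ Polynomial.X ^ (2 ^ e) - 1 := by
    have : Fact (Nat.Prime 2) := ⟨Nat.prime_two⟩
    have h := sub_pow_char_pow (p := 2) (Polynomial.X : Polynomial (ZMod 2)) (Polynomial.C 1) e
    rw [map_one, one_pow] at h
    rw [← h]
    rw [map_one] at hA
    exact hA.dvd.trans (pow_dvd_pow _ hZle)
  have hgS' : g ∣ genPoly (S + foldSeq (2 ^ e) T) := by
    have h1 := hgZ.trans (foldSeq_dvd (2 ^ e) T)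
    have h2 : genPoly (S + foldSeq (2 ^ e) T)
        = genPoly (S + T) - (genPoly T - genPoly (foldSeq (2 ^ e) T)) := by
      rw [genPoly_add, genPoly_add]; ring
    rw [h2]
    exact dvd_sub hgS h1
  have hle : linComp (S + foldSeq (2 ^ e) T) ≤ errLC S k := by
    rw [hL, linComp]
    have := Polynomial.natDegree_le_of_dvd (EuclideanDomain.dvd_gcd hgd hgS')
      (ne_zero_of_dvd_ne_zero hone (EuclideanDomain.gcd_dvd_left _ _))
    omega
  have hmem : linComp (S + foldSeq (2 ^ e) T) ∈ {c | ∃ T : Fin N → ZMod 2, wt T ≤ k ∧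
      (∀ i : Fin N, 2 ^ e ≤ (i : ℕ) → T i = 0) ∧ linComp (S + T) = c} :=
    ⟨_, (foldSeq_wt _ T).trans hT, foldSeq_zone (by positivity) T, rfl⟩
  apply le_antisymm
  · obtain ⟨T', hT', _, hTe'⟩ := Nat.sInf_mem ⟨_, hmem⟩
    exact (hsub 0 T' hT').trans_eq hTe'
  · exact (Nat.sInf_le hmem).trans hle

/-- For `N = 2^v p_1^{s_1} ⋯ p_n^{s_n}` with `2` a primitive root mod each `p_i` and
`p_i^2`, and `L(S) > L_{N,k}(S) ≥ N - min(2^v, p_1-2, ..., p_n-2)`: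
`L_{N,k}(S) = L_{N,k;Z}(S)` for `Z = 2^{⌈log₂(N - L_{N,k}(S))⌉}`. -/
theorem stmt18 (v n k : ℕ) (hv : 0 < v) (hn : 0 < n)
    (p s : Fin n → ℕ)
    (hp : ∀ i, (p i).Prime) (hop : ∀ i, Odd (p i))
    (hs : ∀ i, 0 < s i)
    (hinj : Function.Injective p)
    (hprim1 : ∀ i, orderOf (2 : ZMod (p i)) = Nat.totient (p i))
    (hprim2 : ∀ i, orderOf (2 : ZMod ((p i)^2)) = Nat.totient ((p i)^2))
    (hk1 : 1 ≤ k) (hk : k ≤ 2^v * ∏ i, p i ^ s i)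
    (S : Fin (2^v * ∏ i, p i ^ s i) → ZMod 2)
    (hgt : errLC S k < linComp S)
    (hge1 : 2^v * (∏ i, p i ^ s i) - 2^v ≤ errLC S k)
    (hge2 : ∀ j, 2^v * (∏ i, p i ^ s i) - (p j - 2) ≤ errLC S k) :
    errLC S k
      = errLCZone S k (2^(Nat.clog 2 (2^v * (∏ i, p i ^ s i) - errLC S k))) := by
  exact stmt18_core v n k _ p s rfl hp hs hprim1 S hge2
end
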